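/- Let Ω ⊆ ℂ be a nonempty open set which is simply connected as a topological subspace, and let h : ℂ → ℂ be holomorphic on Ω. Then there exists a function f : ℂ → ℂ holomorphic on Ω such that f′(z) = h(z) for every z ∈ Ω; that is, every holomorphic function on a simply connected open set has a holomorphic primitive. -/

import Mathlib

open Complex

@[ext] structure PrimDiscC where
  val : ℂ

instance : TopologicalSpace PrimDiscC := ⊥
instance : DiscreteTopology PrimDiscC := ⟨rfl⟩

theorem prim_locally_const {F G : ℂ → ℂ} {h : ℂ → ℂ} {U : Set ℂ} (hU : IsOpen U)
    (hF : ∀ z ∈ U, HasDerivAt F (h z) z) (hG : ∀ z ∈ U, HasDerivAt G (h z) z)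
    {x : ℂ} (hx : x ∈ U) : ∀ᶠ y in nhds x, F y - G y = F x - G x := by
  obtain ⟨r, hr, hb⟩ := Metric.isOpen_iff.mp hU x hx
  filter_upwards [Metric.ball_mem_nhds x hr] with y hy
  have hd : ∀ z ∈ Metric.ball x r, HasDerivWithinAt (fun z => F z - G z) 0 (Metric.ball x r) z := by
    intro z hz
    have := (hF z (hb hz)).sub (hG z (hb hz))
    rw [sub_self] at this
    exact this.hasDerivWithinAt
  have := (convex_ball x r).norm_image_sub_le_of_norm_hasDerivWithin_le (C := 0) hd (by simp)
    (Metric.mem_ball_self hr) hy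
  simpa [sub_eq_zero] using this

noncomputable def primCore (Ω : Set ℂ) (h : ℂ → ℂ) (r : Ω → ℝ) (hr : ∀ i, 0 < r i)
    (F : Ω → ℂ → ℂ) (hF : ∀ i : Ω, ∀ z ∈ Metric.ball (i : ℂ) (r i), HasDerivAt (F i) (h z) z) :
    FiberBundleCore Ω Ω PrimDiscC where
  baseSet i := Subtype.val ⁻¹' Metric.ball (i : ℂ) (r i)
  isOpen_baseSet i := Metric.isOpen_ball.preimage continuous_subtype_val
  indexAt x := x
  mem_baseSet_at x := Metric.mem_ball_self (hr x)
  coordChange i j x v := ⟨v.val + (F i x - F j x)⟩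
  coordChange_self i x _ v := by
    ext
    simp
  continuousOn_coordChange i j := by
    rintro ⟨x, v⟩ ⟨⟨hi, hj⟩, -⟩
    apply ContinuousAt.continuousWithinAt
    have h1 := prim_locally_const (Metric.isOpen_ball.inter Metric.isOpen_ball)
      (fun z hz => hF i z hz.1) (fun z hz => hF j z hz.2) (x := (x : ℂ)) ⟨hi, hj⟩
    have h2 : ∀ᶠ y : Ω in nhds x, F i y - F j y = F i x - F j x :=
      continuous_subtype_val.continuousAt.eventually h1
    have h3 : ∀ᶠ w : PrimDiscC in nhds v, w = v := by
      rw [nhds_discrete]; simp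
    refine Filter.Tendsto.congr' ?_ tendsto_const_nhds
    rw [nhds_prod_eq]
    filter_upwards [h2.prod_mk h3] with p hp
    show PrimDiscC.mk (v.val + (F i x - F j x)) = ⟨p.2.val + (F i p.1 - F j p.1)⟩
    rw [hp.1, hp.2]
  coordChange_comp i j k x _ v := by
    ext
    show (v.val + (F i x - F j x)) + (F j x - F k x) = v.val + (F i x - F k x)
    ring

/-- Every holomorphic function on a nonempty simply connected open set `Ω ⊆ ℂ`
has a holomorphic primitive on `Ω`. -/
theorem holomorphic_primitive_exists (Ω : Set ℂ) (hΩ : IsOpen Ω) (hne : Ω.Nonempty)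
    (hsc : SimplyConnectedSpace Ω)
    (h : ℂ → ℂ) (hh : DifferentiableOn ℂ h Ω) :
    ∃ f : ℂ → ℂ, DifferentiableOn ℂ f Ω ∧ ∀ z ∈ Ω, deriv f z = h z := by
  classical
  suffices H : ∃ f : ℂ → ℂ, ∀ z ∈ Ω, HasDerivAt f (h z) z by
    obtain ⟨f, hf⟩ := H
    exact ⟨f, fun z hz => (hf z hz).differentiableAt.differentiableWithinAt,
      fun z hz => (hf z hz).deriv⟩
  have hloc : ∀ i : Ω, ∃ r : ℝ, 0 < r ∧ ∃ F : ℂ → ℂ,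
      ∀ z ∈ Metric.ball (i : ℂ) r, HasDerivAt F (h z) z := by
    intro i
    obtain ⟨r, hr, hb⟩ := Metric.isOpen_iff.mp hΩ i i.2
    obtain ⟨F, hF⟩ := (hh.mono hb).isExactOn_ball
    exact ⟨r, hr, F, hF⟩
  choose r hr F hF using hloc
  let Z := primCore Ω h r hr F hF
  have hcov : IsCoveringMap (Bundle.TotalSpace.proj : Z.TotalSpace → Ω) :=
    FiberBundle.isCoveringMap
  have := hΩ.locallyPathConnectedSpace
  obtain ⟨x₀, hx₀⟩ := hne
  obtain ⟨s, ⟨-, hs⟩, -⟩ := hcov.existsUnique_continuousMap_lifts (ContinuousMap.id Ω) ⟨x₀, hx₀⟩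
    ⟨⟨x₀, hx₀⟩, (⟨0⟩ : PrimDiscC)⟩ rfl
  have hs' : ∀ x, (s x).proj = x := fun x => congrFun hs x
  let g : Ω → ℂ := fun x => F (s x).proj x + PrimDiscC.val (s x).snd
  refine ⟨fun z => if hz : z ∈ Ω then g ⟨z, hz⟩ else 0, fun z hz => ?_⟩
  let i : Ω := ⟨z, hz⟩
  have hg : ∀ x : Ω, g x = F i x + (Z.localTriv i (s x)).2.val := by
    intro x
    have : (Z.localTriv i (s x)).2.val =
      PrimDiscC.val (s x).snd + (F (s x).proj (s x).proj - F i (s x).proj) := rfl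
    rw [this, hs' x]
    show F (s x).proj x + PrimDiscC.val (s x).snd = _
    rw [hs' x]
    ring
  have hc : ContinuousAt (fun x => (Z.localTriv i (s x)).2) i := by
    refine continuous_snd.continuousAt.comp (ContinuousAt.comp ?_ s.continuous.continuousAt)
    apply (Z.localTriv i).continuousAt
    rw [Bundle.Trivialization.mem_source]
    show (s i).proj ∈ _
    rw [hs' i]
    exact Metric.mem_ball_self (hr i)
  have hev : ∀ᶠ x : Ω in nhds i, (Z.localTriv i (s x)).2 = (Z.localTriv i (s i)).2 := by
    refine hc.eventually (p := fun w => w = (Z.localTriv i (s i)).2) ?_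
    rw [nhds_discrete]; simp
  have hev2 : ∀ᶠ y in nhds z, ∀ hy : y ∈ Ω,
      (Z.localTriv i (s ⟨y, hy⟩)).2 = (Z.localTriv i (s i)).2 := by
    have := hev
    rw [nhds_subtype_eq_comap, Filter.eventually_comap] at this
    filter_upwards [this] with y hy hyΩ using hy ⟨y, hyΩ⟩ rfl
  refine HasDerivAt.congr_of_eventuallyEq
    ((hF i z (Metric.mem_ball_self (hr i))).add_const (Z.localTriv i (s i)).2.val) ?_
  filter_upwards [hev2, hΩ.mem_nhds hz] with y hy hyΩ
  rw [dif_pos hyΩ, hg, hy hyΩ]
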